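/- arXiv:1912.07528 — 7 statements merged into one kernel-verified Lean document; each statement's English description precedes it below -/
import Mathlib

section
/- For every t with 1 ≤ t ≤ K−2, the quantity σ_t satisfies 0 < σ_t < 1 and σ_{t+1} < σ_t; i.e., the sequence σ_1, σ_2, ..., σ_{K−1} is strictly decreasing and lies in the open interval (0,1). -/
/-- `σ_t = 1 + log((t+1)/(t+2)) / log((t+1)/t)`. -/
noncomputable def sigma (t : ℕ) : ℝ :=
  1 + Real.log (((t : ℝ) + 1) / ((t : ℝ) + 2)) / Real.log (((t : ℝ) + 1) / (t : ℝ))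

/-!
With `f x = log (x + 1) - log x` one has `σ_t = 1 - f (t + 1) / f t`, and `f` is positive and
strictly decreasing, so `σ_t` lies in `(0, 1)`. It decreases because `f` is strictly log-convex:
`f' / f = -1 / h` with `h x = x (x + 1) f x`, and `h' x = (2 x + 1) f x - 1` is positive since
`f x ≥ 1 / (x + 1)`.
-/

open Set

/-- The increment of the logarithm from `x` to `x + 1`, used for `0 < x`. -/
noncomputable def logStep (x : ℝ) : ℝ :=
  Real.log ((x + 1) / x)

/-- The extension of `sigma` to a real argument, given by the same formula and used for `0 < x`. -/
noncomputable def sigmaReal (x : ℝ) : ℝ :=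
  1 + Real.log ((x + 1) / (x + 2)) / Real.log ((x + 1) / x)

section

variable {c x : ℝ}

theorem inv_add_one_le_logStep (hx : 0 < x) : (x + 1)⁻¹ ≤ logStep x := by
  have h := Real.one_sub_inv_le_log_of_pos (x := (x + 1) / x) (by positivity)
  rwa [inv_div, one_sub_div (by positivity), add_sub_cancel_left, one_div] at h

theorem logStep_pos (hx : 0 < x) : 0 < logStep x :=
  Real.log_pos ((one_lt_div hx).2 (lt_add_one x))

theorem hasDerivAt_logStep (hx : 0 < x) : HasDerivAt logStep (-(x * (x + 1))⁻¹) x := by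
  have hquot : HasDerivAt (fun y ↦ (y + 1) / y) ((1 * x - (x + 1) * 1) / x ^ 2) x :=
    ((hasDerivAt_id' x).add_const 1).fun_div (hasDerivAt_id' x) hx.ne'
  refine (hquot.log (by positivity)).congr_deriv ?_
  field_simp
  ring

theorem strictAntiOn_logStep : StrictAntiOn logStep (Ioi 0) := by
  refine strictAntiOn_of_hasDerivWithinAt_neg (convex_Ioi 0)
    (fun x hx ↦ (hasDerivAt_logStep hx).continuousAt.continuousWithinAt)
    (fun x hx ↦ (hasDerivAt_logStep (interior_subset hx)).hasDerivWithinAt) fun x hx ↦ ?_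
  have hx : 0 < x := interior_subset hx
  exact neg_neg_of_pos (by positivity)

theorem strictMonoOn_mul_logStep : StrictMonoOn (fun x ↦ x * (x + 1) * logStep x) (Ioi 0) := by
  have hderiv {x : ℝ} (hx : 0 < x) :
      HasDerivAt (fun x ↦ x * (x + 1) * logStep x) ((2 * x + 1) * logStep x - 1) x := by
    have hpoly : HasDerivAt (fun x ↦ x * (x + 1)) (1 * (x + 1) + x * 1) x :=
      (hasDerivAt_id' x).fun_mul ((hasDerivAt_id' x).add_const 1)
    refine (hpoly.fun_mul (hasDerivAt_logStep hx)).congr_deriv ?_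
    field_simp
    ring
  refine strictMonoOn_of_hasDerivWithinAt_pos (convex_Ioi 0)
    (fun x hx ↦ (hderiv hx).continuousAt.continuousWithinAt)
    (fun x hx ↦ (hderiv (interior_subset hx)).hasDerivWithinAt) fun x hx ↦ ?_
  have hx : 0 < x := interior_subset hx
  have hone : 1 ≤ (x + 1) * logStep x :=
    (inv_le_iff_one_le_mul₀' (by positivity)).1 (inv_add_one_le_logStep hx)
  linarith [mul_pos hx (logStep_pos hx)]

theorem hasDerivAt_logStep_add_div (hc : 0 < c) (hx : 0 < x) :
    HasDerivAt (fun x ↦ logStep (x + c) / logStep x)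
      (((x + c) * (x + c + 1) * logStep (x + c) - x * (x + 1) * logStep x) /
        (x * (x + 1) * ((x + c) * (x + c + 1)) * logStep x ^ 2)) x := by
  have hpos := logStep_pos hx
  have hshift := (hasDerivAt_logStep (add_pos hx hc)).comp_add_const x c
  refine (hshift.fun_div (hasDerivAt_logStep hx) hpos.ne').congr_deriv ?_
  field_simp
  ring

theorem strictMonoOn_logStep_add_div (hc : 0 < c) :
    StrictMonoOn (fun x ↦ logStep (x + c) / logStep x) (Ioi 0) := by
  refine strictMonoOn_of_hasDerivWithinAt_pos (convex_Ioi 0)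
    (fun x hx ↦ (hasDerivAt_logStep_add_div hc hx).continuousAt.continuousWithinAt)
    (fun x hx ↦ (hasDerivAt_logStep_add_div hc (interior_subset hx)).hasDerivWithinAt)
    fun x hx ↦ ?_
  have hx : 0 < x := interior_subset hx
  have hpos := logStep_pos hx
  have hmul : x * (x + 1) * logStep x < (x + c) * (x + c + 1) * logStep (x + c) :=
    strictMonoOn_mul_logStep hx (add_pos hx hc) (lt_add_of_pos_right x hc)
  exact div_pos (sub_pos.2 hmul) (by positivity)

theorem logStep_add_div_mem_Ioo (hc : 0 < c) (hx : 0 < x) :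
    logStep (x + c) / logStep x ∈ Ioo 0 1 :=
  ⟨div_pos (logStep_pos (add_pos hx hc)) (logStep_pos hx),
    (div_lt_one (logStep_pos hx)).2
      (strictAntiOn_logStep hx (add_pos hx hc) (lt_add_of_pos_right x hc))⟩

theorem sigmaReal_eq_one_sub (x : ℝ) : sigmaReal x = 1 - logStep (x + 1) / logStep x := by
  rw [sigmaReal, logStep, logStep, ← inv_div (x + 2), Real.log_inv, add_assoc x 1 1,
    one_add_one_eq_two]
  ring

end

theorem sigma_strict_anti_and_mem_Ioo_general :
    StrictAntiOn sigmaReal (Ioi 0) ∧ MapsTo sigmaReal (Ioi 0) (Ioo 0 1) := by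
  simp only [StrictAntiOn, MapsTo, sigmaReal_eq_one_sub]
  refine ⟨fun x hx y hy hxy ↦ sub_lt_sub_left (strictMonoOn_logStep_add_div one_pos hx hy hxy) 1,
    fun x hx ↦ ?_⟩
  obtain ⟨hpos, hlt⟩ := logStep_add_div_mem_Ioo one_pos hx
  exact ⟨sub_pos.2 hlt, sub_lt_self 1 hpos⟩

theorem sigma_strict_anti_and_mem_Ioo
    (K : ℕ) (hK : 3 ≤ K) :
    ∀ t : ℕ, 1 ≤ t → t ≤ K - 2 →
      0 < sigma t ∧ sigma t < 1 ∧ sigma (t + 1) < sigma t := by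
  intro t ht _
  obtain ⟨hanti, hmem⟩ := sigma_strict_anti_and_mem_Ioo_general
  have hpos : (0 : ℝ) < t := Nat.cast_pos.2 ht
  have hlt : (t : ℝ) < (t + 1 : ℕ) := Nat.cast_lt.2 t.lt_succ_self
  exact ⟨(hmem hpos).1, (hmem hpos).2, hanti hpos (hpos.trans hlt) hlt⟩
end

section
/- There exists an optimal solution y* of the caching LP with at most two nonzero coordinates; i.e., there is a feasible y* attaining the maximum of f with |{t : y*_t ≠ 0}| ≤ 2. (This corresponds to the statement that the optimal placement uses at most two types of subfiles.) -/
/-- Transmission cost per placement of a type-`t` subfile: `c_t = ρ·t^α`. -/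
noncomputable def cCost (ρ α : ℝ) (t : ℕ) : ℝ := ρ * (t : ℝ) ^ α

/-- `q_t = (N·c_t·(t+1) + t·(K+1)) / (K·(t+1))`. -/
noncomputable def q (K N : ℕ) (ρ α : ℝ) (t : ℕ) : ℝ :=
  ((N : ℝ) * cCost ρ α t * ((t : ℝ) + 1) + (t : ℝ) * ((K : ℝ) + 1)) /
    ((K : ℝ) * ((t : ℝ) + 1))

/-- Feasibility for the caching LP: `Σ_{t=1}^K q_t·y_t ≤ 1`, `Σ_{t=1}^K y_t ≤ 1`,
and `y_t ≥ 0` for all `t ∈ {1,…,K}`. -/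
def Feasible (K N : ℕ) (ρ α : ℝ) (y : ℕ → ℝ) : Prop :=
  (∑ t ∈ Finset.Icc 1 K, q K N ρ α t * y t ≤ 1) ∧
  (∑ t ∈ Finset.Icc 1 K, y t ≤ 1) ∧
  (∀ t ∈ Finset.Icc 1 K, 0 ≤ y t)

/-- The caching LP objective `f(y) = Σ_{t=1}^K (t/(t+1))·y_t`. -/
noncomputable def objF (K : ℕ) (y : ℕ → ℝ) : ℝ :=
  ∑ t ∈ Finset.Icc 1 K, ((t : ℝ) / ((t : ℝ) + 1)) * y t


/- A linear functional on a nonempty compact set attains its maximum at an extreme point of the set.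
At an extreme point of the feasible region of a linear program in nonnegative variables, the columns
of the constraint matrix indexed by the positive variables are linearly independent: a linear
relation among them is a direction along which one can move a little both ways without leaving the
region. Hence at most as many variables are nonzero as there are constraints, two for the caching
linear program. -/

section ExtremePoints

lemma exists_mem_extremePoints_isMaxOn {E : Type*} [AddCommGroup E] [Module ℝ E]
    [TopologicalSpace E] [T2Space E] [IsTopologicalAddGroup E] [ContinuousSMul ℝ E]
    [LocallyConvexSpace ℝ E] {A : Set E} (hA : IsCompact A) (hne : A.Nonempty)
    (l : StrongDual ℝ E) :
    ∃ x ∈ A.extremePoints ℝ, IsMaxOn l A x := by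
  have hexposed : IsExposed ℝ A (l.toExposed A) := ContinuousLinearMap.toExposed.isExposed
  have hface : (l.toExposed A).Nonempty := hA.exists_isMaxOn hne l.continuous.continuousOn
  obtain ⟨x, hx⟩ := (hexposed.isCompact hA).extremePoints_nonempty hface
  exact ⟨x, hexposed.isExtreme.extremePoints_subset_extremePoints hx, hx.1.2⟩

lemma eq_zero_of_mem_extremePoints_of_sub_mem_of_add_mem {𝕜 E : Type*} [Field 𝕜]
    [LinearOrder 𝕜] [IsStrictOrderedRing 𝕜] [AddCommGroup E] [Module 𝕜 E] {A : Set E} {x d : E}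
    (hx : x ∈ A.extremePoints 𝕜) (hsub : x - d ∈ A) (hadd : x + d ∈ A) : d = 0 := by
  have hmid : x ∈ openSegment 𝕜 (x - d) (x + d) :=
    ⟨1 / 2, 1 / 2, by positivity, by positivity, add_halves 1, by module⟩
  exact sub_eq_self.1 (hx.2 hsub hadd hmid)

end ExtremePoints

lemma exists_pos_forall_abs_mul_le {ι 𝕜 : Type*} [Finite ι] [Field 𝕜] [LinearOrder 𝕜]
    [IsStrictOrderedRing 𝕜] {y d : ι → 𝕜} (hy : 0 ≤ y)
    (hd : Function.support d ⊆ Function.support y) :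
    ∃ ε > 0, ∀ i, |ε * d i| ≤ y i := by
  obtain ⟨M, hM⟩ := Finite.exists_le fun i => |d i| / y i
  have hpos : 0 < max M 1 := lt_max_of_lt_right one_pos
  refine ⟨(max M 1)⁻¹, inv_pos.2 hpos, fun i => ?_⟩
  rw [abs_mul, abs_of_pos (inv_pos.2 hpos), inv_mul_le_iff₀ hpos]
  by_cases hi : y i = 0
  · have hdi : d i = 0 := by_contra fun h => hd h hi
    simp only [hi, hdi, abs_zero, mul_zero, le_refl]
  · exact (div_le_iff₀ ((hy i).lt_of_ne' hi)).1 ((hM i).trans (le_max_left M 1))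

section LinearProgram

variable {ι 𝕜 V : Type*} [Fintype ι]

variable (𝕜) in
/-- The feasible region of a linear program in nonnegative variables `y`. The vector `a i` is the
`i`-th column of the constraint matrix and `B` is the set of admissible values of `∑ i, y i • a i`;
the inequality constraints `∑ i, y i • a i ≤ b` correspond to `B = Set.Iic b`. -/
def lpFeasibleSet [Semiring 𝕜] [PartialOrder 𝕜] [AddCommMonoid V] [Module 𝕜 V] (a : ι → V)
    (B : Set V) : Set (ι → 𝕜) :=
  {y | 0 ≤ y ∧ Fintype.linearCombination 𝕜 a y ∈ B}

lemma linearIndepOn_support_of_mem_extremePoints [Field 𝕜] [LinearOrder 𝕜]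
    [IsStrictOrderedRing 𝕜] [AddCommGroup V] [Module 𝕜 V] {a : ι → V} {B : Set V} {y : ι → 𝕜}
    (hy : y ∈ (lpFeasibleSet 𝕜 a B).extremePoints 𝕜) :
    LinearIndepOn 𝕜 a (Function.support y) := by
  obtain ⟨hy0, hyB⟩ := hy.1
  rw [linearIndepOn_iff]
  intro d hd hrel
  have hdy : Function.support d ⊆ Function.support y := by
    rwa [Finsupp.mem_supported, ← Finsupp.fun_support_eq] at hd
  obtain ⟨ε, hε, hεd⟩ := exists_pos_forall_abs_mul_le hy0 hdy
  have hker : Fintype.linearCombination 𝕜 a (ε • ⇑d) = 0 := by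
    rw [map_smul, ← Finsupp.linearCombination_eq_fintype_linearCombination_apply 𝕜,
      Finsupp.linearEquivFunOnFinite_symm_coe, hrel, smul_zero]
  have hsub : y - ε • ⇑d ∈ lpFeasibleSet 𝕜 a B :=
    ⟨fun i => sub_nonneg.2 (abs_le.1 (hεd i)).2, by rwa [map_sub, hker, sub_zero]⟩
  have hadd : y + ε • ⇑d ∈ lpFeasibleSet 𝕜 a B :=
    ⟨fun i => neg_le_iff_add_nonneg'.1 (abs_le.1 (hεd i)).1, by rwa [map_add, hker, add_zero]⟩
  have hzero : ε • ⇑d = 0 :=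
    eq_zero_of_mem_extremePoints_of_sub_mem_of_add_mem hy hsub hadd
  exact DFunLike.coe_injective ((smul_eq_zero.1 hzero).resolve_left hε.ne')

lemma isCompact_lpFeasibleSet [AddCommMonoid V] [Module ℝ V] [TopologicalSpace V]
    [ContinuousAdd V] [ContinuousSMul ℝ V] {a : ι → V} {B : Set V} (hB : IsClosed B)
    (hbdd : BddAbove (lpFeasibleSet ℝ a B)) : IsCompact (lpFeasibleSet ℝ a B) := by
  obtain ⟨u, hu⟩ := hbdd
  have hcont : Continuous (Fintype.linearCombination ℝ a) := LinearMap.continuous_on_pi _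
  have hclosed : IsClosed (lpFeasibleSet ℝ a B) := isClosed_Ici.inter (hB.preimage hcont)
  exact isCompact_Icc.of_isClosed_subset hclosed fun y hy => ⟨hy.1, hu hy⟩

open Finset in
lemma exists_isMaxOn_lpFeasibleSet_card_support_le [AddCommGroup V] [Module ℝ V]
    [FiniteDimensional ℝ V] {a : ι → V} {B : Set V} (hcompact : IsCompact (lpFeasibleSet ℝ a B))
    (hne : (lpFeasibleSet ℝ a B).Nonempty) (c : ι → ℝ) :
    ∃ y ∈ lpFeasibleSet ℝ a B, IsMaxOn (Fintype.linearCombination ℝ c) (lpFeasibleSet ℝ a B) y ∧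
      #{i | y i ≠ 0} ≤ Module.finrank ℝ V := by
  obtain ⟨y, hy, hmax⟩ := exists_mem_extremePoints_isMaxOn hcompact hne
    (Fintype.linearCombination ℝ c).toContinuousLinearMap
  have hindep : LinearIndepOn ℝ a ({i | y i ≠ 0} : Finset ι) := by
    simpa [Function.support] using linearIndepOn_support_of_mem_extremePoints hy
  exact ⟨y, hy.1, hmax, by simpa using LinearIndependent.fintype_card_le_finrank hindep⟩

end LinearProgram

section Restrict

open Finset

variable {ι : Type*} (s : Finset ι)

lemma restrict_surjective {M : Type*} [Nonempty M] :
    Function.Surjective (s.restrict : (ι → M) → s → M) :=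
  Subtype.surjective_restrict (· ∈ s)

lemma linearCombination_restrict {R M : Type*} [Semiring R] [AddCommMonoid M] [Module R M]
    (v : ι → M) (y : ι → R) :
    Fintype.linearCombination R (s.restrict v) (s.restrict y) = ∑ t ∈ s, y t • v t :=
  sum_coe_sort s fun t => y t • v t

lemma card_filter_restrict {M : Type*} (y : ι → M) (p : M → Prop) [DecidablePred p] :
    #{t | p (s.restrict y t)} = #{t ∈ s | p (y t)} := by
  rw [card_filter, card_filter]
  exact sum_coe_sort s fun t => if p (y t) then 1 else 0

end Restrict

section Caching

open Finset

/-- The `t`-th column of the constraint matrix of the caching linear program. -/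
noncomputable def cachingColumn (K N : ℕ) (ρ α : ℝ) (t : ℕ) : ℝ × ℝ :=
  (q K N ρ α t, 1)

/-- The feasible region of the caching linear program, as a set of vectors indexed by the subfile
types `{1, …, K}` only, whereas `Feasible` concerns functions on `ℕ` and ignores their values
elsewhere. -/
def cachingFeasibleSet (K N : ℕ) (ρ α : ℝ) : Set (Icc 1 K → ℝ) :=
  lpFeasibleSet ℝ ((Icc 1 K).restrict (cachingColumn K N ρ α)) (Set.Iic 1)

variable {K N : ℕ} {ρ α : ℝ}

lemma restrict_mem_cachingFeasibleSet {y : ℕ → ℝ} :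
    (Icc 1 K).restrict y ∈ cachingFeasibleSet K N ρ α ↔ Feasible K N ρ α y := by
  have hnonneg : 0 ≤ (Icc 1 K).restrict y ↔ ∀ t ∈ Icc 1 K, 0 ≤ y t :=
    Subtype.forall
  have hcolumns : ∑ t ∈ Icc 1 K, y t • cachingColumn K N ρ α t =
      (∑ t ∈ Icc 1 K, q K N ρ α t * y t, ∑ t ∈ Icc 1 K, y t) := by
    simp [cachingColumn, Prod.ext_iff, Prod.fst_sum, Prod.snd_sum, mul_comm]
  rw [cachingFeasibleSet, lpFeasibleSet, Set.mem_ofPred_eq, linearCombination_restrict, hcolumns,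
    hnonneg, Set.mem_Iic, Prod.le_def, and_comm, and_assoc]
  rfl

lemma objF_eq_linearCombination_restrict (y : ℕ → ℝ) :
    objF K y = Fintype.linearCombination ℝ
      ((Icc 1 K).restrict fun t => (t : ℝ) / ((t : ℝ) + 1)) ((Icc 1 K).restrict y) := by
  rw [linearCombination_restrict]
  exact sum_congr rfl fun t _ => mul_comm _ _

lemma zero_mem_cachingFeasibleSet : 0 ∈ cachingFeasibleSet K N ρ α :=
  ⟨le_rfl, by simp⟩

lemma isCompact_cachingFeasibleSet : IsCompact (cachingFeasibleSet K N ρ α) := by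
  refine isCompact_lpFeasibleSet isClosed_Iic ⟨1, fun y ⟨hy, hcolumns⟩ t => ?_⟩
  have hsum : ∑ s, y s ≤ 1 := by
    simpa [Fintype.linearCombination_apply, cachingColumn, Prod.snd_sum] using hcolumns.2
  exact (single_le_sum (fun s _ => hy s) (mem_univ t)).trans hsum

end Caching

theorem optimal_solution_with_at_most_two_types_general (K N : ℕ) (α ρ : ℝ) :
    ∃ y : ℕ → ℝ, Feasible K N ρ α y ∧
      (∀ z : ℕ → ℝ, Feasible K N ρ α z → objF K z ≤ objF K y) ∧
      ((Finset.Icc 1 K).filter (fun t => y t ≠ 0)).card ≤ 2 := by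
  have hne : (cachingFeasibleSet K N ρ α).Nonempty := ⟨0, zero_mem_cachingFeasibleSet⟩
  obtain ⟨x, hx, hmax, hcard⟩ := exists_isMaxOn_lpFeasibleSet_card_support_le
    isCompact_cachingFeasibleSet hne
    ((Finset.Icc 1 K).restrict fun t => (t : ℝ) / ((t : ℝ) + 1))
  obtain ⟨y, rfl⟩ := restrict_surjective _ x
  have hrank : Module.finrank ℝ (ℝ × ℝ) = 2 := by simp
  refine ⟨y, restrict_mem_cachingFeasibleSet.1 hx, fun z hz => ?_, ?_⟩
  · rw [objF_eq_linearCombination_restrict, objF_eq_linearCombination_restrict]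
    exact hmax (restrict_mem_cachingFeasibleSet.2 hz)
  · exact (card_filter_restrict _ y (· ≠ 0)).ge.trans (hcard.trans_eq hrank)

theorem optimal_solution_with_at_most_two_types
    (K N : ℕ) (hK : 1 ≤ K) (hKN : K ≤ N) (α ρ : ℝ)
    (hα0 : 0 ≤ α) (hα1 : α ≤ 1) (hρ0 : 0 ≤ ρ) (hρ1 : ρ ≤ 1) :
    ∃ y : ℕ → ℝ, Feasible K N ρ α y ∧
      (∀ z : ℕ → ℝ, Feasible K N ρ α z → objF K z ≤ objF K y) ∧
      ((Finset.Icc 1 K).filter (fun t => y t ≠ 0)).card ≤ 2 :=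
  optimal_solution_with_at_most_two_types_general K N α ρ
end

section
/- Assume ρ > 0 and let t ∈ {1,...,K−1}. Then the inequality (t/(t+1))·(1/q_t) ≥ ((t+1)/(t+2))·(1/q_{t+1}) holds if and only if α ≥ σ_t, where σ_t = 1 + log((t+1)/(t+2))/log((t+1)/t). Equivalently, the objective value of the caching LP at the corner point (1/q_t)·e_t is at least its value at (1/q_{t+1})·e_{t+1} exactly when α ≥ σ_t. -/
/-- The `i`-th standard basis vector of `ℝ^K` (as a function on `ℕ`). -/
noncomputable def eVec (i : ℕ) : ℕ → ℝ := fun t => if t = i then 1 else 0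

/-!
The corner `(1/q_t)·e_t` has objective value `K / (N ρ w_t + K + 1)` with `w_t = t^(α-1) (t+1)`, so
the comparison of two corners is the reverse comparison of their weights. For consecutive corners,
`w_t ≤ w_{t+1}` reads `(t+1)/(t+2) ≤ ((t+1)/t)^(α-1)`, and taking logarithms to the base
`(t+1)/t > 1` turns this into `σ_t - 1 ≤ α - 1`.
-/

lemma rpow_mul_le_rpow_mul_iff_logb_le {a b c d β : ℝ} (ha : 0 < a) (hab : a < b) (hc : 0 < c)
    (hd : 0 < d) : a ^ β * c ≤ b ^ β * d ↔ Real.logb (b / a) (c / d) ≤ β := by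
  have hb : 0 < b := ha.trans hab
  rw [Real.logb_le_iff_le_rpow ((one_lt_div ha).2 hab) (div_pos hc hd),
    Real.div_rpow hb.le ha.le, div_le_div_iff₀ hd (Real.rpow_pos_of_pos ha β), mul_comm c]

/-- The weight `w_t = t^(α-1)·(t+1)` of the `t`-th corner: the part of `c_t·(t+1)/t` that depends
on `t`, with the factor `ρ` left out. -/
noncomputable def cornerWeight (α : ℝ) (t : ℕ) : ℝ := (t : ℝ) ^ (α - 1) * ((t : ℝ) + 1)

lemma cornerWeight_nonneg (α : ℝ) (t : ℕ) : 0 ≤ cornerWeight α t := by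
  unfold cornerWeight
  positivity

lemma cornerWeight_le_cornerWeight_iff {s t : ℕ} (hs : 0 < s) (hst : s < t) (α : ℝ) :
    cornerWeight α s ≤ cornerWeight α t ↔
      1 + Real.logb (t / s) (((s : ℝ) + 1) / ((t : ℝ) + 1)) ≤ α := by
  rw [← le_sub_iff_add_le']
  exact rpow_mul_le_rpow_mul_iff_logb_le (Nat.cast_pos.2 hs) (Nat.cast_lt.2 hst)
    s.cast_add_one_pos t.cast_add_one_pos

lemma cornerWeight_le_cornerWeight_succ_iff {t : ℕ} (ht : 0 < t) (α : ℝ) :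
    cornerWeight α t ≤ cornerWeight α (t + 1) ↔ sigma t ≤ α := by
  rw [cornerWeight_le_cornerWeight_iff ht t.lt_succ_self, Nat.cast_add_one, add_assoc (t : ℝ) 1 1,
    one_add_one_eq_two, Real.logb, sigma]

/-- The value `(t/(t+1))·(1/q_t)` of the caching LP objective at the corner `(1/q_t)·e_t`. -/
noncomputable def cornerValue (K N : ℕ) (ρ α : ℝ) (t : ℕ) : ℝ :=
  (t : ℝ) / ((t : ℝ) + 1) * (1 / q K N ρ α t)

lemma objF_const_mul_eVec {K t : ℕ} (ht : t ∈ Finset.Icc 1 K) (c : ℝ) :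
    objF K (fun s => c * eVec t s) = (t : ℝ) / ((t : ℝ) + 1) * c := by
  simp [objF, eVec, Finset.mem_Icc.1 ht]

lemma q_eq_mul_cornerWeight {t : ℕ} (ht : 0 < t) (K N : ℕ) (ρ α : ℝ) :
    q K N ρ α t =
      (t : ℝ) / ((t : ℝ) + 1) * ((N * ρ * cornerWeight α t + (K + 1)) / K) := by
  have ht' : (t : ℝ) ≠ 0 := Nat.cast_ne_zero.2 ht.ne'
  rw [q, cCost, cornerWeight, Real.rpow_sub_one ht']
  field_simp

lemma cornerValue_eq_div {t : ℕ} (ht : 0 < t) (K N : ℕ) (ρ α : ℝ) :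
    cornerValue K N ρ α t = K / (N * ρ * cornerWeight α t + (K + 1)) := by
  have hfactor : (t : ℝ) / ((t : ℝ) + 1) ≠ 0 := by positivity
  rw [cornerValue, q_eq_mul_cornerWeight ht, one_div, mul_inv, mul_inv_cancel_left₀ hfactor,
    inv_div]

lemma cornerValue_le_cornerValue_iff {K N s t : ℕ} {ρ : ℝ} (hK : 0 < K) (hN : 0 < N)
    (hρ : 0 < ρ) (hs : 0 < s) (ht : 0 < t) (α : ℝ) :
    cornerValue K N ρ α t ≤ cornerValue K N ρ α s ↔ cornerWeight α s ≤ cornerWeight α t := by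
  have hden (r : ℕ) : 0 < N * ρ * cornerWeight α r + (K + 1) := by
    have hweight : 0 ≤ cornerWeight α r := cornerWeight_nonneg α r
    positivity
  rw [cornerValue_eq_div ht, cornerValue_eq_div hs,
    div_le_div_iff_of_pos_left (Nat.cast_pos.2 hK) (hden t) (hden s), add_le_add_iff_right,
    mul_le_mul_iff_right₀ (by positivity)]

theorem corner_comparison_iff_sigma_general {K N t : ℕ} {ρ : ℝ} (hN : 0 < N) (hρ : 0 < ρ)
    (ht : 0 < t) (htK : t < K) (α : ℝ) :
    (((t : ℝ) / ((t : ℝ) + 1)) * (1 / q K N ρ α t) ≥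
        (((t : ℝ) + 1) / ((t : ℝ) + 2)) * (1 / q K N ρ α (t + 1)) ↔ sigma t ≤ α) ∧
    (objF K (fun s => (1 / q K N ρ α t) * eVec t s) ≥
        objF K (fun s => (1 / q K N ρ α (t + 1)) * eVec (t + 1) s) ↔ sigma t ≤ α) := by
  have hvalue : cornerValue K N ρ α t ≥ cornerValue K N ρ α (t + 1) ↔ sigma t ≤ α :=
    (cornerValue_le_cornerValue_iff (ht.trans htK) hN hρ ht t.succ_pos α).trans
      (cornerWeight_le_cornerWeight_succ_iff ht α)
  constructor
  · rwa [cornerValue, cornerValue, Nat.cast_add_one, add_assoc (t : ℝ) 1 1,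
      one_add_one_eq_two] at hvalue
  · rwa [objF_const_mul_eVec (Finset.mem_Icc.2 ⟨ht, htK.le⟩),
      objF_const_mul_eVec (Finset.mem_Icc.2 ⟨t.succ_pos, htK⟩)]

theorem corner_comparison_iff_sigma
    (K N : ℕ) (hK : 2 ≤ K) (hKN : K ≤ N) (α ρ : ℝ)
    (hα0 : 0 ≤ α) (hα1 : α ≤ 1) (hρ0 : 0 < ρ) (hρ1 : ρ ≤ 1)
    (t : ℕ) (ht : 1 ≤ t) (htK : t ≤ K - 1) :
    (((t : ℝ) / ((t : ℝ) + 1)) * (1 / q K N ρ α t) ≥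
        (((t : ℝ) + 1) / ((t : ℝ) + 2)) * (1 / q K N ρ α (t + 1)) ↔ sigma t ≤ α) ∧
    (objF K (fun s => (1 / q K N ρ α t) * eVec t s) ≥
        objF K (fun s => (1 / q K N ρ α (t + 1)) * eVec (t + 1) s) ↔ sigma t ≤ α) :=
  corner_comparison_iff_sigma_general (by lia) hρ0 ht (by lia) α
end

section
/- Suppose ρ > (K−1)/(2N) (the cost limited regime) and let t ∈ {1,...,K} satisfy σ_t ≤ α < σ_{t−1}. Then the point y* = (1/q_t)·e_t (i.e., y*_t = K·(t+1)/(N·c_t·(t+1) + t·(K+1)) and all other coordinates zero) is an optimal solution of the caching LP, with optimal value K·t/(N·c_t·(t+1) + t·(K+1)). -/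
/-- `σ_t = 1 + log((t+1)/(t+2)) / log((t+1)/t)` for `1 ≤ t ≤ K−1`, with the
conventions `σ_0 = 1` and `σ_K = 0`. -/
noncomputable def sigmaK (K t : ℕ) : ℝ :=
  if t = 0 then 1
  else if t = K then 0
  else 1 + Real.log (((t : ℝ) + 1) / ((t : ℝ) + 2)) / Real.log (((t : ℝ) + 1) / (t : ℝ))

/-!
The dual point putting the multiplier `(t/(t+1))/q_t` on the first constraint and `0` on the second
is feasible as soon as `t` minimizes the ratio of `q_s` to the objective coefficient `s/(s+1)`.
Up to a nondecreasing affine map, that ratio is `φ(s) = s^(α-1)·(s+1)`. As `φ(exp u)` is a sum of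
two exponentials, it is convex in `u`, so a comparison between consecutive integers propagates to
all larger, respectively smaller, ones, and `φ(t) ≤ φ(t+1)` holds exactly when `σ_t ≤ α`. The cost
limited regime gives `1 ≤ q_t`, so that the primal point satisfies the second constraint.
-/

section WeakDuality

variable {ι R : Type*} [Field R] [LinearOrder R] [IsStrictOrderedRing R]

lemma sum_mul_le_div_mul_of_mul_le_mul {s : Finset ι} {v w y : ι → R} {i : ι} {b : R}
    (hv : 0 ≤ v i) (hw : 0 < w i) (hratio : ∀ j ∈ s, v j * w i ≤ v i * w j)
    (hy : ∀ j ∈ s, 0 ≤ y j) (hb : ∑ j ∈ s, w j * y j ≤ b) :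
    ∑ j ∈ s, v j * y j ≤ v i / w i * b := by
  have hdual : ∀ j ∈ s, v j ≤ v i / w i * w j := fun j hj => by
    rw [div_mul_eq_mul_div, le_div_iff₀ hw]
    exact hratio j hj
  calc ∑ j ∈ s, v j * y j
      ≤ ∑ j ∈ s, v i / w i * (w j * y j) := Finset.sum_le_sum fun j hj => by
        rw [← mul_assoc]
        exact mul_le_mul_of_nonneg_right (hdual j hj) (hy j hj)
    _ = v i / w i * ∑ j ∈ s, w j * y j := (Finset.mul_sum ..).symm
    _ ≤ v i / w i * b := by gcongr

end WeakDuality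

section ConvexCompExp

variable {f : ℝ → ℝ} {x y z : ℝ}

lemma le_right_of_convexOn_comp_exp (hf : ConvexOn ℝ Set.univ fun u => f (Real.exp u))
    (hx : 0 < x) (hxy : x < y) (hyz : y ≤ z) (h : f x ≤ f y) : f y ≤ f z := by
  have hy := hx.trans hxy
  have hz := hy.trans_le hyz
  simpa only [Real.exp_log hy, Real.exp_log hz] using
    hf.le_right_of_left_le'' (Set.mem_univ _) (Set.mem_univ _) (Real.log_lt_log hx hxy)
      (Real.log_le_log hy hyz) (by simpa only [Real.exp_log hx, Real.exp_log hy] using h)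

lemma le_left_of_convexOn_comp_exp (hf : ConvexOn ℝ Set.univ fun u => f (Real.exp u))
    (hx : 0 < x) (hxy : x ≤ y) (hyz : y < z) (h : f z ≤ f y) : f y ≤ f x := by
  have hy := hx.trans_le hxy
  have hz := hy.trans hyz
  simpa only [Real.exp_log hx, Real.exp_log hy] using
    hf.le_left_of_right_le'' (Set.mem_univ _) (Set.mem_univ _) (Real.log_le_log hx hxy)
      (Real.log_lt_log hy hyz) (by simpa only [Real.exp_log hy, Real.exp_log hz] using h)

end ConvexCompExp

/-- The relative cost of a subfile type, that is the ratio of the cost `c_t` to the objective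
coefficient `t/(t+1)` for `ρ = 1`, with `t` extended to a real variable `x`. -/
noncomputable def relCost (α x : ℝ) : ℝ := x ^ (α - 1) * (x + 1)

section RelCost

variable {α x : ℝ}

lemma relCost_pos (hx : 0 < x) : 0 < relCost α x := by
  unfold relCost
  positivity

lemma log_relCost (hx : 0 < x) :
    Real.log (relCost α x) = (α - 1) * Real.log x + Real.log (x + 1) := by
  rw [relCost, Real.log_mul (by positivity) (by positivity), Real.log_rpow hx]

lemma relCost_exp (α u : ℝ) :
    relCost α (Real.exp u) = Real.exp (α * u) + Real.exp ((α - 1) * u) := by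
  rw [relCost, ← Real.exp_mul, mul_add, mul_one, ← Real.exp_add]
  ring_nf

lemma convexOn_relCost_exp (α : ℝ) :
    ConvexOn ℝ Set.univ fun u => relCost α (Real.exp u) := by
  have convexOn_exp_mul (a : ℝ) : ConvexOn ℝ Set.univ fun u => Real.exp (a * u) :=
    convexOn_exp.comp_linearMap (LinearMap.mul ℝ ℝ a)
  simp only [relCost_exp]
  exact (convexOn_exp_mul α).add (convexOn_exp_mul (α - 1))

lemma relCost_le_relCost_add_one_iff (hx : 0 < x) :
    relCost α x ≤ relCost α (x + 1) ↔
      1 + Real.log ((x + 1) / (x + 2)) / Real.log ((x + 1) / x) ≤ α := by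
  have hx1 : 0 < x + 1 := by linarith
  have hx2 : 0 < x + 2 := by linarith
  have hlog : 0 < Real.log (x + 1) - Real.log x :=
    sub_pos.2 (Real.log_lt_log hx (by linarith))
  rw [← Real.log_le_log_iff (relCost_pos hx) (relCost_pos hx1), log_relCost hx, log_relCost hx1,
    Real.log_div hx1.ne' hx2.ne', Real.log_div hx1.ne' hx.ne', ← le_sub_iff_add_le' (a := 1),
    div_le_iff₀ hlog, show x + 1 + 1 = x + 2 by ring]
  constructor <;> intro h <;> linarith

end RelCost

section Threshold

variable {K t s : ℕ} {α : ℝ}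

lemma sigmaK_le_iff (ht : t ≠ 0) (htK : t ≠ K) :
    sigmaK K t ≤ α ↔ relCost α t ≤ relCost α (t + 1) := by
  rw [relCost_le_relCost_add_one_iff (by positivity), sigmaK, if_neg ht, if_neg htK]

lemma sigmaK_nonneg (K t : ℕ) : 0 ≤ sigmaK K t := by
  unfold sigmaK
  split_ifs with ht htK
  · exact zero_le_one
  · exact le_rfl
  have ht0 : (0 : ℝ) < t := by positivity
  have hlog : 0 < Real.log (((t : ℝ) + 1) / t) :=
    Real.log_pos ((one_lt_div ht0).2 (by linarith))
  have hratio : ((t : ℝ) + 2) / (t + 1) ≤ (t + 1) / t := by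
    rw [div_le_div_iff₀ (by positivity) ht0]
    linarith
  have hle : Real.log (((t : ℝ) + 2) / (t + 1)) ≤ Real.log ((t + 1) / t) :=
    Real.log_le_log (by positivity) hratio
  rw [← inv_div ((t : ℝ) + 2), Real.log_inv, neg_div, ← sub_eq_add_neg, sub_nonneg]
  exact (div_le_one hlog).2 hle

lemma relCost_le_of_sigmaK_le (ht : t ≠ 0) (hσ : sigmaK K t ≤ α) (hts : t ≤ s) (hsK : s ≤ K) :
    relCost α t ≤ relCost α s := by
  rcases hts.eq_or_lt with rfl | hts
  · rfl
  have hstep := (sigmaK_le_iff ht (by omega)).1 hσ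
  exact hstep.trans <| le_right_of_convexOn_comp_exp (convexOn_relCost_exp α) (by positivity)
    (lt_add_one _) (by exact_mod_cast hts) hstep

lemma relCost_le_of_lt_sigmaK (htK : t ≤ K) (hσ : α < sigmaK K (t - 1)) (hs : 1 ≤ s)
    (hst : s ≤ t) : relCost α t ≤ relCost α s := by
  rcases hst.eq_or_lt with rfl | hst
  · rfl
  obtain ⟨r, rfl⟩ : ∃ r, t = r + 1 := ⟨t - 1, by omega⟩
  rw [Nat.add_sub_cancel, ← not_le, sigmaK_le_iff (by omega) (by omega), not_le] at hσ
  push_cast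
  exact hσ.le.trans <| le_left_of_convexOn_comp_exp (convexOn_relCost_exp α)
    (by exact_mod_cast hs) (by exact_mod_cast Nat.lt_succ_iff.1 hst) (lt_add_one _) hσ.le

end Threshold

section CachingLP

variable {K N t s : ℕ} {ρ α c : ℝ}

lemma q_eq_mul_relCost (hs : s ≠ 0) :
    q K N ρ α s = (s : ℝ) / (s + 1) * ((N * ρ * relCost α s + (K + 1)) / K) := by
  have hs0 : (s : ℝ) ≠ 0 := Nat.cast_ne_zero.2 hs
  rw [q, cCost, relCost, Real.rpow_sub_one hs0, div_mul_div_comm, mul_comm (K : ℝ)]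
  congr 1
  field_simp

lemma mul_q_le_mul_q_of_relCost_le (hρ : 0 ≤ ρ) (ht : t ≠ 0) (hs : s ≠ 0)
    (h : relCost α t ≤ relCost α s) :
    (s : ℝ) / (s + 1) * q K N ρ α t ≤ (t : ℝ) / (t + 1) * q K N ρ α s := by
  rw [q_eq_mul_relCost ht, q_eq_mul_relCost hs, mul_left_comm]
  gcongr

lemma one_le_q (hK : 1 ≤ K) (hα : 0 ≤ α) (hρ : ((K : ℝ) - 1) / 2 ≤ N * ρ) (ht : 1 ≤ t) :
    1 ≤ q K N ρ α t := by
  have hK1 : (1 : ℝ) ≤ K := by exact_mod_cast hK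
  have ht1 : (1 : ℝ) ≤ t := by exact_mod_cast ht
  have hNc : ((K : ℝ) - 1) / 2 ≤ N * cCost ρ α t := by
    rw [cCost, ← mul_assoc]
    exact hρ.trans (le_mul_of_one_le_right (by linarith) (Real.one_le_rpow ht1 hα))
  have hscaled : ((K : ℝ) - 1) / 2 * (t + 1) ≤ N * cCost ρ α t * (t + 1) := by gcongr
  have hnonneg : 0 ≤ ((K : ℝ) + 1) * (t - 1) :=
    mul_nonneg (by positivity) (sub_nonneg.2 ht1)
  rw [q, one_le_div (by positivity)]
  linarith

lemma objF_ite (ht : t ∈ Finset.Icc 1 K) :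
    objF K (fun s => if s = t then c else 0) = (t : ℝ) / (t + 1) * c := by
  simp only [objF, mul_ite, mul_zero, Finset.sum_ite_eq', if_pos ht]

lemma feasible_ite (ht : t ∈ Finset.Icc 1 K) (hc0 : 0 ≤ c) (hc1 : c ≤ 1)
    (hqc : q K N ρ α t * c ≤ 1) : Feasible K N ρ α (fun s => if s = t then c else 0) := by
  refine ⟨?_, ?_, fun s _ => ite_nonneg hc0 le_rfl⟩
  · simpa only [mul_ite, mul_zero, Finset.sum_ite_eq', if_pos ht] using hqc
  · simpa only [Finset.sum_ite_eq', if_pos ht] using hc1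

lemma one_div_q (K N : ℕ) (ρ α : ℝ) (t : ℕ) :
    1 / q K N ρ α t =
      (K : ℝ) * ((t : ℝ) + 1) /
        ((N : ℝ) * cCost ρ α t * ((t : ℝ) + 1) + (t : ℝ) * ((K : ℝ) + 1)) := by
  rw [q, one_div_div]

lemma mul_one_div_q (K N : ℕ) (ρ α : ℝ) (t : ℕ) :
    (t : ℝ) / (t + 1) * (1 / q K N ρ α t) =
      (K : ℝ) * (t : ℝ) /
        ((N : ℝ) * cCost ρ α t * ((t : ℝ) + 1) + (t : ℝ) * ((K : ℝ) + 1)) := by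
  have ht1 : (t : ℝ) + 1 ≠ 0 := by positivity
  rw [one_div_q]
  field_simp

end CachingLP

theorem cost_limited_regime_optimal_general
    (K N : ℕ) (hN : 0 < N) (α ρ : ℝ)
    (hρ : ((K : ℝ) - 1) / (2 * (N : ℝ)) < ρ)
    (t : ℕ) (ht : 1 ≤ t) (htK : t ≤ K)
    (hσ₁ : sigmaK K t ≤ α) (hσ₂ : α < sigmaK K (t - 1)) :
    Feasible K N ρ α (fun s => if s = t then 1 / q K N ρ α t else 0) ∧
    (∀ z : ℕ → ℝ, Feasible K N ρ α z →
      objF K z ≤ objF K (fun s => if s = t then 1 / q K N ρ α t else 0)) ∧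
    (1 / q K N ρ α t =
      (K : ℝ) * ((t : ℝ) + 1) /
        ((N : ℝ) * cCost ρ α t * ((t : ℝ) + 1) + (t : ℝ) * ((K : ℝ) + 1))) ∧
    objF K (fun s => if s = t then 1 / q K N ρ α t else 0) =
      (K : ℝ) * (t : ℝ) /
        ((N : ℝ) * cCost ρ α t * ((t : ℝ) + 1) + (t : ℝ) * ((K : ℝ) + 1)) := by
  have hK : 1 ≤ K := ht.trans htK
  have hρ0 : 0 ≤ ρ :=
    (div_nonneg (sub_nonneg.2 (by exact_mod_cast hK)) (by positivity)).trans hρ.le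
  have hNρ : ((K : ℝ) - 1) / 2 ≤ N * ρ := by
    rw [div_lt_iff₀ (by positivity)] at hρ
    linarith
  have hq : 1 ≤ q K N ρ α t := one_le_q hK ((sigmaK_nonneg K t).trans hσ₁) hNρ ht
  have hq0 : 0 < q K N ρ α t := zero_lt_one.trans_le hq
  have htmem : t ∈ Finset.Icc 1 K := Finset.mem_Icc.2 ⟨ht, htK⟩
  refine ⟨feasible_ite htmem (by positivity) ((div_le_one hq0).2 hq)
    (mul_one_div_cancel hq0.ne').le, fun z ⟨hz, _, hz0⟩ => ?_, one_div_q K N ρ α t,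
    (objF_ite htmem).trans (mul_one_div_q K N ρ α t)⟩
  rw [objF_ite htmem, mul_one_div, ← mul_one (_ / q K N ρ α t)]
  refine sum_mul_le_div_mul_of_mul_le_mul (by positivity) hq0 (fun s hs => ?_) hz0 hz
  obtain ⟨hs1, hsK⟩ := Finset.mem_Icc.1 hs
  have hmin : relCost α t ≤ relCost α s :=
    (le_total t s).elim (relCost_le_of_sigmaK_le (by omega) hσ₁ · hsK)
      (relCost_le_of_lt_sigmaK htK hσ₂ hs1)
  exact mul_q_le_mul_q_of_relCost_le hρ0 (by omega) (by omega) hmin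

theorem cost_limited_regime_optimal
    (K N : ℕ) (hK : 1 ≤ K) (hKN : K ≤ N) (α ρ : ℝ)
    (hα0 : 0 ≤ α) (hα1 : α ≤ 1) (hρ0 : 0 ≤ ρ) (hρ1 : ρ ≤ 1)
    (hρ : ((K : ℝ) - 1) / (2 * (N : ℝ)) < ρ)
    (t : ℕ) (ht : 1 ≤ t) (htK : t ≤ K)
    (hσ₁ : sigmaK K t ≤ α) (hσ₂ : α < sigmaK K (t - 1)) :
    Feasible K N ρ α (fun s => if s = t then 1 / q K N ρ α t else 0) ∧
    (∀ z : ℕ → ℝ, Feasible K N ρ α z →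
      objF K z ≤ objF K (fun s => if s = t then 1 / q K N ρ α t else 0)) ∧
    (1 / q K N ρ α t =
      (K : ℝ) * ((t : ℝ) + 1) /
        ((N : ℝ) * cCost ρ α t * ((t : ℝ) + 1) + (t : ℝ) * ((K : ℝ) + 1))) ∧
    objF K (fun s => if s = t then 1 / q K N ρ α t else 0) =
      (K : ℝ) * (t : ℝ) /
        ((N : ℝ) * cCost ρ α t * ((t : ℝ) + 1) + (t : ℝ) * ((K : ℝ) + 1)) :=
  cost_limited_regime_optimal_general K N (hK.trans hKN) α ρ hρ t ht htK hσ₁ hσ₂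
end

section
/- (Claim 1) Let a ∈ {1,...,K−1}, b = a+1, and suppose q_a ≤ 1 < q_b. Fix i ≤ a with q_i ≤ 1. Then among the intersection points p(i,j) for j ∈ {b,...,K}, the LP objective f is maximized at j = b: for every j with b ≤ j ≤ K, f(p(i,b)) ≥ f(p(i,j)). -/
/-- The intersection point `p(i,j)`: `y_i = (q_j − 1)/(q_j − q_i)`,
`y_j = (1 − q_i)/(q_j − q_i)`, and `y_t = 0` otherwise. -/
noncomputable def pInter (K N : ℕ) (ρ α : ℝ) (i j : ℕ) : ℕ → ℝ := fun t =>
  if t = i then (q K N ρ α j - 1) / (q K N ρ α j - q K N ρ α i)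
  else if t = j then (1 - q K N ρ α i) / (q K N ρ α j - q K N ρ α i)
  else 0

/-!
In terms of `x = t / (t + 1)` we have `t = x / (1 - x)`, so `q_t = φ(x_t)` with
`φ(x) = (N ρ / K) (x / (1 - x)) ^ α + ((K + 1) / K) x`. For `x ≥ 1/2` the logit
`log x - log (1 - x)` is convex, hence so are `(x / (1 - x)) ^ α` and `φ`. On the other hand
`f(p(i,j)) = x_i + (1 - q_i) (x_j - x_i) / (q_j - q_i)`, where the last fraction is the reciprocal
of a secant slope of `φ` based at `x_i`. These slopes increase with `j` and `q_i ≤ 1`, so `f(p(i,j))`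
decreases.
-/

open Set Real

section Convexity

lemma convexOn_exp_comp {E : Type*} [AddCommMonoid E] [SMul ℝ E] {s : Set E} {f : E → ℝ}
    (hf : ConvexOn ℝ s f) : ConvexOn ℝ s fun x ↦ exp (f x) :=
  ⟨hf.1, fun _ hx _ hy _ _ ha hb hab ↦ (exp_le_exp.2 (hf.2 hx hy ha hb hab)).trans
    (convexOn_exp.2 (mem_univ _) (mem_univ _) ha hb hab)⟩

lemma hasDerivAt_log_sub_log_one_sub {x : ℝ} (hx : x ≠ 0) (hx' : 1 - x ≠ 0) :
    HasDerivAt (fun x ↦ log x - log (1 - x)) (x * (1 - x))⁻¹ x := by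
  have hderiv := (hasDerivAt_log hx).fun_sub (((hasDerivAt_id' x).const_sub 1).log hx')
  have hvalue : x⁻¹ - -1 / (1 - x) = (x * (1 - x))⁻¹ := by
    field_simp
    ring
  rwa [hvalue] at hderiv

lemma antitoneOn_mul_one_sub : AntitoneOn (fun x : ℝ ↦ x * (1 - x)) (Ici (1 / 2)) := by
  intro x (hx : 1 / 2 ≤ x) y (hy : 1 / 2 ≤ y) hxy
  have : 0 ≤ (y - x) * (x + y - 1) := mul_nonneg (sub_nonneg.2 hxy) (by linarith)
  linarith

lemma convexOn_log_sub_log_one_sub :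
    ConvexOn ℝ (Ico (1 / 2) 1) fun x : ℝ ↦ log x - log (1 - x) := by
  have pos : ∀ x ∈ Ico (1 / 2 : ℝ) 1, 0 < x ∧ 0 < 1 - x :=
    fun x hx ↦ ⟨by linarith [hx.1], sub_pos.2 hx.2⟩
  have hderiv : ∀ x ∈ Ico (1 / 2 : ℝ) 1,
      HasDerivAt (fun x ↦ log x - log (1 - x)) (x * (1 - x))⁻¹ x :=
    fun x hx ↦ hasDerivAt_log_sub_log_one_sub (pos x hx).1.ne' (pos x hx).2.ne'
  refine MonotoneOn.convexOn_of_deriv (convex_Ico _ _)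
    (fun x hx ↦ (hderiv x hx).continuousAt.continuousWithinAt)
    (fun x hx ↦ (hderiv x (interior_subset hx)).differentiableAt.differentiableWithinAt)
    (MonotoneOn.mono ?_ interior_subset)
  intro x hx y hy hxy
  rw [(hderiv x hx).deriv, (hderiv y hy).deriv]
  exact inv_anti₀ (mul_pos (pos y hy).1 (pos y hy).2) (antitoneOn_mul_one_sub hx.1 hy.1 hxy)

lemma convexOn_div_one_sub_rpow {α : ℝ} (hα : 0 ≤ α) :
    ConvexOn ℝ (Ico (1 / 2) 1) fun x : ℝ ↦ (x / (1 - x)) ^ α := by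
  refine (convexOn_exp_comp (convexOn_log_sub_log_one_sub.smul hα)).congr fun x hx ↦ ?_
  have hx0 : 0 < x := by linarith [hx.1]
  have hx1 : 0 < 1 - x := sub_pos.2 hx.2
  simp only [smul_eq_mul]
  rw [rpow_def_of_pos (div_pos hx0 hx1), log_div hx0.ne' hx1.ne', mul_comm]

end Convexity

/-- The coefficient `t / (t + 1)` of `y_t` in the caching LP objective. -/
noncomputable def gain (t : ℕ) : ℝ := t / (t + 1)

/-- The function `φ` with `q_t = φ(t / (t + 1))`, giving the coefficient of `y_t` in the caching LP
constraint in terms of its coefficient `x = t / (t + 1)` in the objective; `t` is recovered from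
`x` as `x / (1 - x)`. -/
noncomputable def qOfGain (K N : ℕ) (ρ α x : ℝ) : ℝ :=
  N * ρ / K * (x / (1 - x)) ^ α + (K + 1) / K * x

lemma gain_strictMono : StrictMono gain := by
  intro s t hst
  have hst : (s : ℝ) < t := by exact_mod_cast hst
  rw [gain, gain, div_lt_div_iff₀ (by positivity) (by positivity)]
  linarith

lemma gain_div_one_sub_gain (t : ℕ) : gain t / (1 - gain t) = t := by
  have : (t : ℝ) + 1 ≠ 0 := by positivity
  rw [gain, one_sub_div this, add_sub_cancel_left, div_div_div_cancel_right₀ this, div_one]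

lemma gain_mem_Ico {t : ℕ} (ht : 1 ≤ t) : gain t ∈ Ico (1 / 2 : ℝ) 1 := by
  have ht : (1 : ℝ) ≤ t := by exact_mod_cast ht
  constructor
  · rw [gain, div_le_div_iff₀ two_pos (by positivity)]
    linarith
  · rw [gain, div_lt_one (by positivity)]
    linarith

section CachingLP

variable {K N : ℕ} {ρ α : ℝ} {i : ℕ}

lemma qOfGain_gain (t : ℕ) : qOfGain K N ρ α (gain t) = q K N ρ α t := by
  have : (t : ℝ) + 1 ≠ 0 := by positivity
  rw [qOfGain, gain_div_one_sub_gain, gain, q, cCost, div_mul_div_comm, add_div,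
    mul_div_mul_right _ _ this]
  ring

lemma convexOn_qOfGain (hρ : 0 ≤ ρ) (hα : 0 ≤ α) :
    ConvexOn ℝ (Ico (1 / 2) 1) (qOfGain K N ρ α) :=
  ((convexOn_div_one_sub_rpow hα).smul (by positivity : 0 ≤ N * ρ / K)).add
    ((convexOn_id (convex_Ico _ _)).smul (by positivity : (0 : ℝ) ≤ (K + 1) / K))

lemma q_strictMono (hK : 0 < K) (hρ : 0 ≤ ρ) (hα : 0 ≤ α) : StrictMono (q K N ρ α) := by
  intro s t hst
  have hgain : gain s < gain t := gain_strictMono hst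
  have hrpow : (s : ℝ) ^ α ≤ (t : ℝ) ^ α := by gcongr
  simp only [← qOfGain_gain, qOfGain, gain_div_one_sub_gain]
  exact add_lt_add_of_le_of_lt (mul_le_mul_of_nonneg_left hrpow (by positivity))
    (mul_lt_mul_of_pos_left hgain (by positivity))

lemma antitoneOn_gain_sub_div_q_sub (hK : 0 < K) (hρ : 0 ≤ ρ) (hα : 0 ≤ α) (hi : 1 ≤ i) :
    AntitoneOn (fun j ↦ (gain j - gain i) / (q K N ρ α j - q K N ρ α i)) (Ioi i) := by
  intro j (hj : i < j) k (hk : i < k) hjk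
  have hslope := (convexOn_qOfGain (K := K) (N := N) hρ hα).secant_mono (gain_mem_Ico hi)
    (gain_mem_Ico (hi.trans hj.le)) (gain_mem_Ico (hi.trans hk.le))
    (gain_strictMono hj).ne' (gain_strictMono hk).ne' (gain_strictMono.monotone hjk)
  simp only [qOfGain_gain] at hslope
  have hslope_pos : 0 < (q K N ρ α j - q K N ρ α i) / (gain j - gain i) :=
    div_pos (sub_pos.2 (q_strictMono hK hρ hα hj)) (sub_pos.2 (gain_strictMono hj))
  simpa only [inv_div] using inv_anti₀ hslope_pos hslope

lemma objF_pInter {j : ℕ} (hi : i ∈ Finset.Icc 1 K) (hj : j ∈ Finset.Icc 1 K)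
    (hq : q K N ρ α i ≠ q K N ρ α j) :
    objF K (pInter K N ρ α i j) = gain i +
      (1 - q K N ρ α i) * ((gain j - gain i) / (q K N ρ α j - q K N ρ α i)) := by
  have hij : i ≠ j := ne_of_apply_ne _ hq
  have hd : q K N ρ α j - q K N ρ α i ≠ 0 := sub_ne_zero.2 hq.symm
  have hsum : objF K (pInter K N ρ α i j) =
      gain i * ((q K N ρ α j - 1) / (q K N ρ α j - q K N ρ α i)) +
        gain j * ((1 - q K N ρ α i) / (q K N ρ α j - q K N ρ α i)) := by
    rw [objF, Finset.sum_eq_add_of_mem i j hi hj hij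
      fun t _ ht ↦ by simp [pInter, ht.1, ht.2]]
    simp [pInter, gain, hij.symm]
  rw [hsum]
  field_simp
  ring

theorem claim1_intersection_maximized_at_b_general (hρ : 0 ≤ ρ) (hα : 0 ≤ α) (hi : 1 ≤ i)
    (hqi : q K N ρ α i ≤ 1) :
    AntitoneOn (fun j ↦ objF K (pInter K N ρ α i j)) (Ioc i K) := by
  have objF_eq : ∀ j ∈ Ioc i K, objF K (pInter K N ρ α i j) = gain i +
      (1 - q K N ρ α i) * ((gain j - gain i) / (q K N ρ α j - q K N ρ α i)) :=
    fun j ⟨hij, hjK⟩ ↦ objF_pInter (Finset.mem_Icc.2 ⟨hi, hij.le.trans hjK⟩)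
      (Finset.mem_Icc.2 ⟨hi.trans hij.le, hjK⟩) (q_strictMono (by omega) hρ hα hij).ne
  intro j hj k hk hjk
  simp only [objF_eq j hj, objF_eq k hk]
  gcongr gain i + ?_
  exact mul_le_mul_of_nonneg_left
    (antitoneOn_gain_sub_div_q_sub (hi.trans (hj.1.le.trans hj.2)) hρ hα hi hj.1 hk.1 hjk)
    (sub_nonneg.2 hqi)

end CachingLP

theorem claim1_intersection_maximized_at_b
    (K N : ℕ) (hK : 2 ≤ K) (hKN : K ≤ N) (α ρ : ℝ)
    (hα0 : 0 ≤ α) (hα1 : α ≤ 1) (hρ0 : 0 ≤ ρ) (hρ1 : ρ ≤ 1)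
    (a : ℕ) (ha : 1 ≤ a) (haK : a + 1 ≤ K)
    (hqa : q K N ρ α a ≤ 1) (hqb : 1 < q K N ρ α (a + 1))
    (i : ℕ) (hi : 1 ≤ i) (hia : i ≤ a) (hqi : q K N ρ α i ≤ 1) :
    ∀ j : ℕ, a + 1 ≤ j → j ≤ K →
      objF K (pInter K N ρ α i j) ≤ objF K (pInter K N ρ α i (a + 1)) := by
  intro j hbj hjK
  have hib : i < a + 1 := Nat.lt_succ_of_le hia
  exact claim1_intersection_maximized_at_b_general hρ0 hα0 hi hqi
    ⟨hib, haK⟩ ⟨hib.trans_le hbj, hjK⟩ hbj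
end

section
/- (Claim 3) Let a ∈ {1,...,K−1} and suppose q_a < 1 < q_{a+1}. Then the LP objective at the intersection point p(a,a+1) strictly exceeds its value at the corner point e_a (the point with y_a = 1 and all other coordinates zero): f(p(a,a+1)) > f(e_a) = a/(a+1). -/
open AffineMap (lineMap)

theorem strictMonoOn_div_add_one {𝕜 : Type*} [Field 𝕜] [LinearOrder 𝕜] [IsStrictOrderedRing 𝕜] :
    StrictMonoOn (fun x : 𝕜 ↦ x / (x + 1)) (Set.Ioi (-1)) := by
  intro x hx y hy hxy
  have hx' : 0 < x + 1 := neg_lt_iff_pos_add.1 hx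
  have hy' : 0 < y + 1 := neg_lt_iff_pos_add.1 hy
  rw [div_lt_div_iff₀ hx' hy']
  linarith

theorem objF_eVec {K i : ℕ} (hi : i ∈ Finset.Icc 1 K) :
    objF K (eVec i) = (i : ℝ) / ((i : ℝ) + 1) := by
  simp only [objF, eVec, mul_ite, mul_one, mul_zero, Finset.sum_ite_eq', if_pos hi]

theorem objF_eVec_lt_objF_eVec {K i j : ℕ} (hi : 1 ≤ i) (hij : i < j) (hj : j ≤ K) :
    objF K (eVec i) < objF K (eVec j) := by
  rw [objF_eVec (Finset.mem_Icc.2 ⟨hi, hij.le.trans hj⟩),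
    objF_eVec (Finset.mem_Icc.2 ⟨hi.trans hij.le, hj⟩)]
  have neg_one_lt_cast (n : ℕ) : (-1 : ℝ) < n := neg_one_lt_zero.trans_le n.cast_nonneg
  exact strictMonoOn_div_add_one (neg_one_lt_cast i) (neg_one_lt_cast j) (Nat.cast_lt.2 hij)

theorem objF_lineMap (K : ℕ) (y z : ℕ → ℝ) (r : ℝ) :
    objF K (lineMap y z r) = lineMap (objF K y) (objF K z) r := by
  simp only [objF, AffineMap.lineMap_apply_module, Pi.add_apply, Pi.smul_apply, smul_eq_mul,
    mul_add, Finset.sum_add_distrib, Finset.mul_sum, mul_left_comm]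

theorem pInter_eq_lineMap {K N i j : ℕ} {ρ α : ℝ} (hq : q K N ρ α i ≠ q K N ρ α j) :
    pInter K N ρ α i j =
      lineMap (eVec i) (eVec j) ((1 - q K N ρ α i) / (q K N ρ α j - q K N ρ α i)) := by
  have hij : i ≠ j := ne_of_apply_ne _ hq
  have weight_left : (q K N ρ α j - 1) / (q K N ρ α j - q K N ρ α i) =
      1 - (1 - q K N ρ α i) / (q K N ρ α j - q K N ρ α i) := by
    rw [one_sub_div (sub_ne_zero.2 hq.symm), sub_sub_sub_cancel_right]
  ext t
  rw [AffineMap.pi_lineMap_apply, AffineMap.lineMap_apply_ring, ← weight_left]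
  by_cases hti : t = i
  · simp [pInter, eVec, hti, hij]
  · simp [pInter, eVec, hti]

theorem claim3_intersection_beats_corner_general {K N i j : ℕ} {ρ α : ℝ}
    (hi : 1 ≤ i) (hij : i < j) (hj : j ≤ K)
    (hqi : q K N ρ α i < 1) (hq : q K N ρ α i < q K N ρ α j) :
    objF K (eVec i) < objF K (pInter K N ρ α i j) ∧
    objF K (eVec i) = (i : ℝ) / ((i : ℝ) + 1) := by
  refine ⟨?_, objF_eVec (Finset.mem_Icc.2 ⟨hi, hij.le.trans hj⟩)⟩
  have weight_pos : 0 < (1 - q K N ρ α i) / (q K N ρ α j - q K N ρ α i) :=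
    div_pos (sub_pos.2 hqi) (sub_pos.2 hq)
  rw [pInter_eq_lineMap hq.ne, objF_lineMap, left_lt_lineMap_iff_lt weight_pos]
  exact objF_eVec_lt_objF_eVec hi hij hj

theorem claim3_intersection_beats_corner
    (K N : ℕ) (hK : 2 ≤ K) (hKN : K ≤ N) (α ρ : ℝ)
    (hα0 : 0 ≤ α) (hα1 : α ≤ 1) (hρ0 : 0 ≤ ρ) (hρ1 : ρ ≤ 1)
    (a : ℕ) (ha : 1 ≤ a) (haK : a + 1 ≤ K)
    (hqa : q K N ρ α a < 1) (hqb : 1 < q K N ρ α (a + 1)) :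
    objF K (eVec a) < objF K (pInter K N ρ α a (a + 1)) ∧
    objF K (eVec a) = (a : ℝ) / ((a : ℝ) + 1) :=
  claim3_intersection_beats_corner_general ha a.lt_succ_self haK hqa (hqa.trans hqb)
end

section
/- (Architecture limited regime optimality, single-type case) Let a ∈ {1,...,K−1}, b = a+1, and suppose γ_{a+1} < ρ ≤ γ_a (equivalently q_a ≤ 1 < q_b). Let j ∈ {b,...,K} satisfy σ_j ≤ α < σ_{j−1}. Then the point y* = (1/q_j)·e_j (i.e., y*_j = 1/q_j and all other coordinates zero) is an optimal solution of the caching LP. -/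
/-- `γ_t = (K−t)/(t^α·(t+1)·N)`. -/
noncomputable def gam (K N : ℕ) (α : ℝ) (t : ℕ) : ℝ :=
  ((K : ℝ) - (t : ℝ)) / ((t : ℝ) ^ α * ((t : ℝ) + 1) * (N : ℝ))

/-!
Write `q_t = t/(t+1) · (N·ρ·φ(t) + K + 1)/K` with `φ(x) = x^α + x^(α-1)`. In an LP with a single
budget constraint the whole budget goes to the variable of best value per unit of price, which here
is the one of least `φ(t)`; when `q_j ≥ 1` for that variable, the other constraint
`Σ y_t ≤ 1` holds automatically. As a function of `log x`, `φ` is a sum of two exponentials, hence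
convex, so a minimum over consecutive integers is found by comparing neighbours, and for
`1 ≤ t < K` the number `σ_t` is precisely the exponent `α` at which `φ(t) = φ(t+1)`.
-/

/-- The function `φ(x) = x^α + x^(α-1)`. At `x = t` it is the part depending on `t` of the price
`q_t·(t+1)/t` of one unit of objective obtained from type-`t` subfiles. It is defined for real `x`
so that convexity can be used. -/
noncomputable def placementCost (α x : ℝ) : ℝ := x ^ α + x ^ (α - 1)

section PlacementCost

variable {α x y z : ℝ}

lemma placementCost_eq_rpow_mul (hx : x ≠ 0) :
    placementCost α x = x ^ (α - 1) * (x + 1) := by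
  rw [placementCost, Real.rpow_sub_one hx]
  field_simp

lemma placementCost_pos (hx : 0 < x) : 0 < placementCost α x := by
  unfold placementCost
  positivity

lemma log_placementCost (hx : 0 < x) :
    Real.log (placementCost α x) = (α - 1) * Real.log x + Real.log (x + 1) := by
  rw [placementCost_eq_rpow_mul hx.ne', Real.log_mul (by positivity) (by positivity),
    Real.log_rpow hx]

lemma placementCost_le_add_one_iff (hx : 0 < x) :
    placementCost α x ≤ placementCost α (x + 1) ↔
      1 + Real.log ((x + 1) / (x + 2)) / Real.log ((x + 1) / x) ≤ α := by
  have hlog : 0 < Real.log ((x + 1) / x) := Real.log_pos (by rw [one_lt_div hx]; linarith)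
  have hx1 : 0 < x + 1 := by positivity
  rw [← Real.log_le_log_iff (placementCost_pos hx) (placementCost_pos hx1),
    log_placementCost hx, log_placementCost hx1, ← le_sub_iff_add_le' (c := α), div_le_iff₀ hlog,
    Real.log_div hx1.ne' (by positivity), Real.log_div hx1.ne' hx.ne', add_assoc x 1 1,
    one_add_one_eq_two]
  constructor <;> intro h <;> linarith

lemma convexOn_placementCost_exp (α : ℝ) :
    ConvexOn ℝ Set.univ fun u ↦ placementCost α (Real.exp u) := by
  have h_exp_rpow (c : ℝ) : ConvexOn ℝ Set.univ fun u ↦ Real.exp u ^ c := by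
    simpa only [← Real.exp_mul, mul_comm] using convexOn_rpow_left (Real.exp_pos c)
  exact (h_exp_rpow α).add (h_exp_rpow (α - 1))

lemma placementCost_le_of_le_right (hx : 0 < x) (hxy : x < y) (hyz : y ≤ z)
    (h : placementCost α x ≤ placementCost α y) : placementCost α y ≤ placementCost α z := by
  have hy := hx.trans hxy
  have hz := hy.trans_le hyz
  simpa only [Real.exp_log, hx, hy, hz] using
    (convexOn_placementCost_exp α).le_right_of_left_le'' trivial trivial
      (Real.log_lt_log hx hxy) (Real.log_le_log hy hyz)
      (by simpa only [Real.exp_log, hx, hy] using h)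

lemma placementCost_le_of_le_left (hx : 0 < x) (hxy : x ≤ y) (hyz : y < z)
    (h : placementCost α z ≤ placementCost α y) : placementCost α y ≤ placementCost α x := by
  have hy := hx.trans_le hxy
  have hz := hy.trans hyz
  simpa only [Real.exp_log, hx, hy, hz] using
    (convexOn_placementCost_exp α).le_left_of_right_le'' trivial trivial
      (Real.log_le_log hx hxy) (Real.log_lt_log hy hyz)
      (by simpa only [Real.exp_log, hy, hz] using h)

lemma sigmaK_le_iff_placementCost_le_add_one {K t : ℕ} (ht : t ≠ 0) (htK : t ≠ K) :
    sigmaK K t ≤ α ↔ placementCost α t ≤ placementCost α (t + 1) := by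
  rw [sigmaK, if_neg ht, if_neg htK, placementCost_le_add_one_iff (by positivity)]

lemma placementCost_le_of_sigmaK {K j t : ℕ} (hj : j ∈ Finset.Icc 1 K) (ht : t ∈ Finset.Icc 1 K)
    (hσ₁ : sigmaK K j ≤ α) (hσ₂ : α < sigmaK K (j - 1)) :
    placementCost α j ≤ placementCost α t := by
  obtain ⟨hj1, hjK⟩ := Finset.mem_Icc.1 hj
  obtain ⟨ht1, htK⟩ := Finset.mem_Icc.1 ht
  have ht0 : (0 : ℝ) < t := by exact_mod_cast ht1
  rcases lt_trichotomy t j with htj | rfl | hjt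
  · obtain ⟨i, rfl⟩ : ∃ i, j = i + 1 := ⟨j - 1, by omega⟩
    have hti : (t : ℝ) ≤ i := by exact_mod_cast Nat.lt_succ_iff.1 htj
    have h_step : placementCost α (i + 1) < placementCost α i := by
      rwa [Nat.add_sub_cancel, ← not_le,
        sigmaK_le_iff_placementCost_le_add_one (by omega) (by omega), not_le] at hσ₂
    rw [Nat.cast_add_one]
    exact h_step.le.trans (placementCost_le_of_le_left ht0 hti (lt_add_one _) h_step.le)
  · exact le_rfl
  · have hjt' : (j : ℝ) + 1 ≤ t := by exact_mod_cast hjt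
    have h_step := (sigmaK_le_iff_placementCost_le_add_one (by omega) (by omega)).1 hσ₁
    exact h_step.trans
      (placementCost_le_of_le_right (by exact_mod_cast hj1) (lt_add_one _) hjt' h_step)

end PlacementCost

lemma sum_mul_le_mul_div_of_sum_mul_le {ι R : Type*} [Field R] [LinearOrder R]
    [IsStrictOrderedRing R] {s : Finset ι} {w p y : ι → R} {b v r : R} (hr : 0 < r)
    (hv : 0 ≤ v) (hy : ∀ i ∈ s, 0 ≤ y i) (h_ratio : ∀ i ∈ s, w i * r ≤ v * p i)
    (h_budget : ∑ i ∈ s, p i * y i ≤ b) : ∑ i ∈ s, w i * y i ≤ v * (b / r) := by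
  rw [← mul_div_assoc, le_div_iff₀ hr]
  calc (∑ i ∈ s, w i * y i) * r = ∑ i ∈ s, w i * r * y i := by
        simp only [Finset.sum_mul, mul_right_comm]
    _ ≤ ∑ i ∈ s, v * p i * y i :=
        Finset.sum_le_sum fun i hi ↦ mul_le_mul_of_nonneg_right (h_ratio i hi) (hy i hi)
    _ = v * ∑ i ∈ s, p i * y i := by simp only [Finset.mul_sum, mul_assoc]
    _ ≤ v * b := by gcongr

section CachingLP

variable {K N : ℕ} {ρ α : ℝ}

lemma q_eq_mul_placementCost {t : ℕ} (ht : t ≠ 0) :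
    q K N ρ α t = (t : ℝ) / (t + 1) * ((N * ρ * placementCost α t + (K + 1)) / K) := by
  have ht' : (t : ℝ) ≠ 0 := by exact_mod_cast ht
  rw [q, cCost, placementCost, Real.rpow_sub_one ht']
  field_simp

lemma div_mul_q_le_div_mul_q {s t : ℕ} (hρ : 0 ≤ ρ) (hs : s ≠ 0) (ht : t ≠ 0)
    (h : placementCost α s ≤ placementCost α t) :
    (t : ℝ) / (t + 1) * q K N ρ α s ≤ (s : ℝ) / (s + 1) * q K N ρ α t := by
  rw [q_eq_mul_placementCost hs, q_eq_mul_placementCost ht, mul_left_comm]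
  gcongr

lemma monotone_q (hρ : 0 ≤ ρ) (hα : 0 ≤ α) : Monotone (q K N ρ α) := by
  have hq (r : ℕ) : q K N ρ α r =
      N * (ρ * (r : ℝ) ^ α) / K + (1 - 1 / ((r : ℝ) + 1)) * ((K + 1) / K) := by
    rw [q, cCost]
    field_simp
    ring
  intro s t hst
  have hst' : (s : ℝ) ≤ t := by exact_mod_cast hst
  rw [hq, hq]
  gcongr

lemma gam_lt_iff_one_lt_q {t : ℕ} (hK : K ≠ 0) (hN : N ≠ 0) (ht : t ≠ 0) :
    gam K N α t < ρ ↔ 1 < q K N ρ α t := by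
  rw [gam, q, cCost, div_lt_iff₀ (by positivity), one_lt_div (by positivity)]
  constructor <;> intro h <;> linarith

lemma feasible_ite_eq {j : ℕ} {c : ℝ} (hj : j ∈ Finset.Icc 1 K) :
    Feasible K N ρ α (fun s ↦ if s = j then c else 0) ↔
      q K N ρ α j * c ≤ 1 ∧ c ≤ 1 ∧ 0 ≤ c := by
  have h_nonneg : (∀ t ∈ Finset.Icc 1 K, 0 ≤ if t = j then c else 0) ↔ 0 ≤ c :=
    ⟨fun h ↦ by simpa using h j hj, fun h t _ ↦ ite_nonneg h le_rfl⟩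
  simp only [Feasible, mul_ite, mul_zero, Finset.sum_ite_eq', hj, if_true, h_nonneg]

lemma objF_ite_eq {j : ℕ} (hj : j ∈ Finset.Icc 1 K) (c : ℝ) :
    objF K (fun s ↦ if s = j then c else 0) = (j : ℝ) / (j + 1) * c := by
  simp only [objF, mul_ite, mul_zero, Finset.sum_ite_eq', hj, if_true]

end CachingLP

theorem architecture_limited_regime_single_type_optimal_general
    {K N j : ℕ} {α ρ : ℝ} (hρ : 0 ≤ ρ) (hj : j ∈ Finset.Icc 1 K) (hq : 1 ≤ q K N ρ α j)
    (hσ₁ : sigmaK K j ≤ α) (hσ₂ : α < sigmaK K (j - 1)) :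
    Feasible K N ρ α (fun s ↦ if s = j then 1 / q K N ρ α j else 0) ∧
    (∀ z : ℕ → ℝ, Feasible K N ρ α z →
      objF K z ≤ objF K (fun s ↦ if s = j then 1 / q K N ρ α j else 0)) := by
  have hq0 : 0 < q K N ρ α j := one_pos.trans_le hq
  refine ⟨(feasible_ite_eq hj).2
    ⟨(mul_one_div_cancel hq0.ne').le, (div_le_one hq0).2 hq, by positivity⟩, ?_⟩
  rintro z ⟨hz_budget, -, hz_nonneg⟩
  rw [objF_ite_eq hj]
  refine sum_mul_le_mul_div_of_sum_mul_le hq0 (by positivity) hz_nonneg (fun t ht ↦ ?_) hz_budget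
  have hj1 := (Finset.mem_Icc.1 hj).1
  have ht1 := (Finset.mem_Icc.1 ht).1
  exact div_mul_q_le_div_mul_q hρ (by omega) (by omega)
    (placementCost_le_of_sigmaK hj ht hσ₁ hσ₂)

theorem architecture_limited_regime_single_type_optimal
    (K N : ℕ) (hK : 2 ≤ K) (hKN : K ≤ N) (α ρ : ℝ)
    (hα0 : 0 ≤ α) (hα1 : α ≤ 1) (hρ0 : 0 ≤ ρ) (hρ1 : ρ ≤ 1)
    (a : ℕ) (ha : 1 ≤ a) (haK : a + 1 ≤ K)
    (hγ₁ : gam K N α (a + 1) < ρ) (hγ₂ : ρ ≤ gam K N α a)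
    (j : ℕ) (hj : a + 1 ≤ j) (hjK : j ≤ K)
    (hσ₁ : sigmaK K j ≤ α) (hσ₂ : α < sigmaK K (j - 1)) :
    Feasible K N ρ α (fun s => if s = j then 1 / q K N ρ α j else 0) ∧
    (∀ z : ℕ → ℝ, Feasible K N ρ α z →
      objF K z ≤ objF K (fun s => if s = j then 1 / q K N ρ α j else 0)) :=
  architecture_limited_regime_single_type_optimal_general hρ0
    (Finset.mem_Icc.2 ⟨by omega, hjK⟩)
    (((gam_lt_iff_one_lt_q (by omega) (by omega) (by omega)).1 hγ₁).le.trans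
      (monotone_q hρ0 hα0 hj)) hσ₁ hσ₂
end
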